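/- Let a < t0 be reals and let V : (a,t0) → ℝ^P be real-analytic with V′(t) = F(V(t), t) for all t ∈ (a,t0), where F is an ℝ^P-valued real-analytic map on an open neighbourhood of {(V(t), t) : t ∈ (a,t0)} which is uniformly Lipschitz-like at every point of its domain. Suppose the limit V0 = lim_{t → t0⁻} V(t) exists in ℝ^P and that F is real-analytic at (V0, t0). Then V admits a real-analytic continuation up to t0: there exist r > 0 and a real-analytic map U : (a, t0 + r) → ℝ^P with U = V on (a,t0), U(t0) = V0, and U′(t) = F(U(t), t) on (a, t0 + r). -/

import Mathlib

open Set

/-!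
Fix `t₀` and pull the solution back to the unit interval: `u t` is the path
`s ↦ γ (t₀ + (t - t₀) * s)`, with `γ t₀` read as the limit from the left. The integral equation for
`γ` becomes `u t = x₀ + (t - t₀) • T (u t)`, where `T u = ∫₀ f ∘ u` is an analytic map of the Banach
space `C([0, 1], E)` near the constant path `x₀`. The analytic implicit function theorem solves this
equation uniquely near `(t₀, x₀)`, so `u`, and hence `γ = u · 1`, coincides to the left of `t₀` with
a map analytic at `t₀`. By the identity theorem that map still solves the differential equation to
the right of `t₀`.
-/

open Filter Topology unitInterval
open scoped ContDiff

section Superposition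

variable {𝕜 E F : Type*} (K : Type*) [NontriviallyNormedField 𝕜] [TopologicalSpace K]
  [CompactSpace K] [NormedAddCommGroup E] [NormedSpace 𝕜 E] [NormedAddCommGroup F]
  [NormedSpace 𝕜 F]

/-- The continuous multilinear map on `C(K, E)` obtained by applying a continuous multilinear map
on `E` at each point of `K`. -/
noncomputable def pointwiseMultilinear {n : ℕ} (φ : E [×n]→L[𝕜] F) : C(K, E) [×n]→L[𝕜] C(K, F) :=
  MultilinearMap.mkContinuous
    { toFun := fun m => ⟨fun s => φ fun i => m i s, by fun_prop⟩
      map_update_add' := fun m i x y => ContinuousMap.ext fun s =>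
        (φ.compContinuousLinearMap fun _ => ContinuousMap.evalCLM 𝕜 s).map_update_add m i x y
      map_update_smul' := fun m i c x => ContinuousMap.ext fun s =>
        (φ.compContinuousLinearMap fun _ => ContinuousMap.evalCLM 𝕜 s).map_update_smul m i c x }
    ‖φ‖ fun m => (ContinuousMap.norm_le _ (by positivity)).2 fun s =>
      (φ.le_opNorm _).trans <| by
        gcongr
        exact (m _).norm_coe_le_norm s

lemma norm_pointwiseMultilinear_le {n : ℕ} (φ : E [×n]→L[𝕜] F) :
    ‖pointwiseMultilinear K φ‖ ≤ ‖φ‖ :=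
  MultilinearMap.mkContinuous_norm_le _ (norm_nonneg _) _

/-- The power series on `C(K, E)` of the superposition operator `u ↦ f ∘ u`, for `p` a power series
of `f`. -/
noncomputable def superpositionSeries (p : FormalMultilinearSeries 𝕜 E F) :
    FormalMultilinearSeries 𝕜 C(K, E) C(K, F) :=
  fun n => pointwiseMultilinear K (p n)

lemma radius_le_radius_superpositionSeries (p : FormalMultilinearSeries 𝕜 E F) :
    p.radius ≤ (superpositionSeries K p).radius :=
  FormalMultilinearSeries.radius_le_of_le fun n => norm_pointwiseMultilinear_le K (p n)

theorem exists_analyticAt_superposition [CompleteSpace F] {f : E → F} {x₀ : E}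
    (hf : AnalyticAt 𝕜 f x₀) :
    ∃ N : C(K, E) → C(K, F), AnalyticAt 𝕜 N (.const K x₀) ∧
      ∀ᶠ u in 𝓝 (ContinuousMap.const K x₀), ∀ s, N u s = f (u s) := by
  obtain ⟨p, r, hp⟩ := hf
  have hr : r ≤ (superpositionSeries K p).radius :=
    hp.r_le.trans (radius_le_radius_superpositionSeries K p)
  have hN := ((superpositionSeries K p).hasFPowerSeriesOnBall (hp.r_pos.trans_le hr)).comp_sub
    (ContinuousMap.const K x₀)
  rw [zero_add] at hN
  refine ⟨_, hN.analyticAt, ?_⟩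
  filter_upwards [Metric.eball_mem_nhds (ContinuousMap.const K x₀) hp.r_pos] with u hu s
  have hus : u s ∈ Metric.eball x₀ r := by
    rw [Metric.mem_eball, ContinuousMap.edist_eq_iSup] at hu
    exact (le_iSup (fun s => edist (u s) x₀) s).trans_lt hu
  have hsum := (ContinuousMap.evalCLM 𝕜 s : C(K, F) →L[𝕜] F).hasSum
    (hN.hasSum_sub (Metric.eball_subset_eball hr hu))
  exact hsum.unique (hp.hasSum_sub hus)

end Superposition

section Primitive

variable {E : Type*} [NormedAddCommGroup E] [NormedSpace ℝ E]

variable (E) in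
/-- Integration from `0`, as a continuous linear operator on continuous paths `[0, 1] → E`; a path
is extended to `ℝ` by constants in order to be integrated. -/
noncomputable def primitiveCLM : C(I, E) →L[ℝ] C(I, E) :=
  have hc (u : C(I, E)) : Continuous (IccExtend zero_le_one u) := u.continuous.Icc_extend'
  LinearMap.mkContinuous
    { toFun := fun u => ⟨fun s => ∫ x in (0 : ℝ)..s, IccExtend zero_le_one u x,
        (intervalIntegral.continuous_primitive
          (fun _ _ => (hc u).intervalIntegrable _ _) 0).comp continuous_subtype_val⟩
      map_add' := fun u v => ContinuousMap.ext fun _ => intervalIntegral.integral_add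
        ((hc u).intervalIntegrable _ _) ((hc v).intervalIntegrable _ _)
      map_smul' := fun c _ => ContinuousMap.ext fun _ => intervalIntegral.integral_smul c _ }
    1 fun u => (ContinuousMap.norm_le _ (by positivity)).2 fun s => calc
      _ ≤ ‖u‖ * |(s : ℝ) - 0| :=
        intervalIntegral.norm_integral_le_of_norm_le_const fun _ _ => u.norm_coe_le_norm _
      _ ≤ ‖u‖ * 1 := by
        gcongr
        rw [sub_zero, abs_of_nonneg s.2.1]
        exact s.2.2
      _ = 1 * ‖u‖ := mul_comm _ _

lemma primitiveCLM_apply_of_eqOn {u : C(I, E)} {g : ℝ → E} (h : ∀ s : I, u s = g s) (s : I) :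
    primitiveCLM E u s = ∫ x in (0 : ℝ)..s, g x := by
  refine intervalIntegral.integral_congr fun x hx => ?_
  rw [uIcc_of_le s.2.1] at hx
  have hxI : x ∈ I := ⟨hx.1, hx.2.trans s.2.2⟩
  exact (IccExtend_of_mem zero_le_one _ hxI).trans (h ⟨x, hxI⟩)

end Primitive

theorem exists_analyticAt_eventuallyEq_of_eq_add_smul {𝕜 X : Type*} [RCLike 𝕜]
    [NormedAddCommGroup X] [NormedSpace 𝕜 X] [CompleteSpace X] {T : X → X} {x₀ : X} {t₀ : 𝕜}
    {u : 𝕜 → X} {l : Filter 𝕜} (hT : AnalyticAt 𝕜 T x₀) (hl : l ≤ 𝓝 t₀)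
    (hu : Tendsto u l (𝓝 x₀)) (heq : ∀ᶠ t in l, u t = x₀ + (t - t₀) • T (u t)) :
    ∃ A : 𝕜 → X, AnalyticAt 𝕜 A t₀ ∧ A t₀ = x₀ ∧ A =ᶠ[l] u := by
  let Φ : 𝕜 × X → X := fun q => q.2 - (q.1 - t₀) • T q.2
  have hTs : AnalyticAt 𝕜 (fun q : 𝕜 × X => T q.2) (t₀, x₀) :=
    hT.comp_of_eq analyticAt_snd rfl
  have hΦ : ContDiffAt 𝕜 ω Φ (t₀, x₀) :=
    (analyticAt_snd.sub ((analyticAt_fst.sub analyticAt_const).smul hTs)).contDiffAt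
  have hΦ' : fderiv 𝕜 Φ (t₀, x₀) ∘L .inr 𝕜 𝕜 X = .id 𝕜 X := by
    have h : HasFDerivAt Φ _ (t₀, x₀) := hasFDerivAt_snd.sub
      ((hasFDerivAt_fst.sub_const t₀).smul hTs.differentiableAt.hasFDerivAt)
    ext x
    rw [h.fderiv]
    simp
  have hinv : (fderiv 𝕜 Φ (t₀, x₀) ∘L .inr 𝕜 𝕜 X).IsInvertible :=
    ⟨.refl 𝕜 X, hΦ'.symm⟩
  refine ⟨hΦ.implicitFunction (by simp) hinv, (hΦ.contDiffAt_implicitFunction _ hinv).analyticAt,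
    hΦ.implicitFunction_apply_self _ hinv, ?_⟩
  have hcurve : Tendsto (fun t => (t, u t)) l (𝓝 (t₀, x₀)) := Tendsto.prodMk_nhds hl hu
  filter_upwards [hcurve.eventually (hΦ.eventually_apply_eq_iff_implicitFunction (by simp) hinv),
    heq] with t hiff ht
  exact hiff.1 <| by simp [Φ, sub_eq_iff_eq_add, ← ht]

lemma hasDerivAt_ode_congr {𝕜 E : Type*} [NontriviallyNormedField 𝕜] [NormedAddCommGroup E]
    [NormedSpace 𝕜 E] {F : E → 𝕜 → E} {g h : 𝕜 → E} {t : 𝕜} (hgh : g =ᶠ[𝓝 t] h)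
    (hh : HasDerivAt h (F (h t) t) t) : HasDerivAt g (F (g t) t) t := by
  rw [hgh.eq_of_nhds]
  exact hh.congr_of_eventuallyEq hgh

theorem eventually_hasDerivAt_ode_of_frequently {𝕜 E : Type*} [NontriviallyNormedField 𝕜]
    [NormedAddCommGroup E] [NormedSpace 𝕜 E] [CompleteSpace E] {F : E → 𝕜 → E} {A : 𝕜 → E}
    {t₀ : 𝕜} (hF : AnalyticAt 𝕜 (fun q : E × 𝕜 => F q.1 q.2) (A t₀, t₀)) (hA : AnalyticAt 𝕜 A t₀)
    (h : ∃ᶠ t in 𝓝[≠] t₀, HasDerivAt A (F (A t) t) t) :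
    ∀ᶠ t in 𝓝 t₀, HasDerivAt A (F (A t) t) t := by
  have hFA : AnalyticAt 𝕜 (fun t => F (A t) t) t₀ := hF.comp₂ hA analyticAt_id
  have heq := (hA.deriv.frequently_eq_iff_eventually_eq hFA).1 (h.mono fun _ ht => ht.deriv)
  filter_upwards [heq, hA.eventually_analyticAt] with t ht hAt
  exact ht ▸ hAt.differentiableAt.hasDerivAt

lemma eventually_eventuallyEq_nhds_of_left {E : Type*} {g h : ℝ → E} {t₀ : ℝ}
    (hgh : g =ᶠ[𝓝[<] t₀] h) : ∀ᶠ t in 𝓝[<] t₀, g =ᶠ[𝓝 t] h := by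
  filter_upwards [eventually_eventually_nhdsWithin.2 hgh, self_mem_nhdsWithin] with t ht hlt
  rwa [isOpen_Iio.nhdsWithin_eq hlt] at ht

lemma exists_continuousMap_eventuallyEq_left {E : Type*} [TopologicalSpace E] {γ : ℝ → E} {x₀ : E}
    {t₀ : ℝ} (hγ : ∀ᶠ t in 𝓝[<] t₀, ContinuousAt γ t) (hlim : Tendsto γ (𝓝[<] t₀) (𝓝 x₀)) :
    ∃ β : C(ℝ, E), β t₀ = x₀ ∧ β =ᶠ[𝓝[<] t₀] γ := by
  obtain ⟨b, hb : b < t₀, hγb⟩ := mem_nhdsLT_iff_exists_Ico_subset.1 hγ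
  have hcont : ContinuousOn (Function.update γ t₀ x₀) (Icc b t₀) := by
    rw [continuousOn_update_iff, Icc_sdiff_right]
    exact ⟨fun t ht => (hγb ht).continuousWithinAt,
      fun _ => hlim.mono_left (nhdsWithin_mono _ fun t ht => ht.2)⟩
  refine ⟨⟨IccExtend hb.le ((Icc b t₀).domRestrict (Function.update γ t₀ x₀)),
    (continuousOn_iff_continuous_domRestrict.1 hcont).Icc_extend'⟩, by simp, ?_⟩
  filter_upwards [Ioo_mem_nhdsLT hb] with t ht
  simp [IccExtend_of_mem hb.le _ (Ioo_subset_Icc_self ht), ht.2.ne]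

section Solution

variable {E : Type*} [NormedAddCommGroup E] [NormedSpace ℝ E]

lemma exists_forall_Icc_eq_add_integral [CompleteSpace E] {f : E → E} {β : ℝ → E} {t₀ : ℝ}
    (hf : ∀ᶠ x in 𝓝 (β t₀), ContinuousAt f x) (hβ : Continuous β)
    (hsol : ∀ᶠ t in 𝓝[<] t₀, HasDerivAt β (f (β t)) t) :
    ∃ a < t₀, ∀ t ∈ Icc a t₀, β t = β t₀ + ∫ τ in t₀..t, f (β τ) := by
  have hnear := (hβ.continuousAt.eventually hf).and (eventually_nhdsWithin_iff.1 hsol)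
  obtain ⟨a, ha, hsub⟩ := mem_nhdsLE_iff_exists_Icc_subset.1 (mem_nhdsWithin_of_mem_nhds hnear)
  refine ⟨a, ha, fun t ht => ?_⟩
  have hft : ContinuousOn (fun τ => f (β τ)) (Icc t t₀) := fun τ hτ =>
    ((hsub ⟨ht.1.trans hτ.1, hτ.2⟩).1.comp hβ.continuousAt).continuousWithinAt
  rw [intervalIntegral.integral_symm, intervalIntegral.integral_eq_sub_of_hasDerivAt_of_le ht.2
    hβ.continuousOn (fun τ hτ => (hsub ⟨ht.1.trans hτ.1.le, hτ.2.le⟩).2 hτ.2)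
    (hft.intervalIntegrable_of_Icc ht.2)]
  abel

/-- The path `s ↦ β (t₀ + (t - t₀) * s)` in `C([0, 1], E)`, as a continuous function of `t`: the
stretch of `β` between `t₀` and `t`, reparametrized by the unit interval. -/
def rescaledPath {X : Type*} [TopologicalSpace X] (β : C(ℝ, X)) (t₀ : ℝ) : C(ℝ, C(I, X)) :=
  ContinuousMap.curry ⟨fun p : ℝ × I => β (t₀ + (p.1 - t₀) * p.2), by fun_prop⟩

lemma rescaledPath_apply {X : Type*} [TopologicalSpace X] (β : C(ℝ, X)) (t₀ t : ℝ) (s : I) :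
    rescaledPath β t₀ t s = β (t₀ + (t - t₀) * s) :=
  rfl

lemma rescaledPath_self {X : Type*} [TopologicalSpace X] (β : C(ℝ, X)) (t₀ : ℝ) :
    rescaledPath β t₀ t₀ = .const I (β t₀) := by
  ext s
  simp [rescaledPath_apply]

lemma rescaledPath_eq_add_smul_primitiveCLM {f : E → E} {β : C(ℝ, E)} {v : C(I, E)} {t₀ t : ℝ}
    (ht : t ≤ t₀) (hβ : ∀ τ ∈ Icc t t₀, β τ = β t₀ + ∫ r in t₀..τ, f (β r))
    (hv : ∀ s, v s = f (rescaledPath β t₀ t s)) :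
    rescaledPath β t₀ t = .const I (β t₀) + (t - t₀) • primitiveCLM E v := by
  ext s
  have hmem : t₀ + (t - t₀) * s ∈ Icc t t₀ := by
    constructor <;> nlinarith [s.2.1, s.2.2]
  calc rescaledPath β t₀ t s
      = β t₀ + ∫ r in t₀..t₀ + (t - t₀) * s, f (β r) := hβ _ hmem
    _ = β t₀ + (t - t₀) • ∫ x in (0 : ℝ)..s, f (β (t₀ + (t - t₀) * x)) := by
      rw [intervalIntegral.smul_integral_comp_add_mul (fun r => f (β r)), mul_zero, add_zero]
    _ = β t₀ + (t - t₀) • primitiveCLM E v s := by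
      rw [primitiveCLM_apply_of_eqOn (g := fun x => f (β (t₀ + (t - t₀) * x))) hv]

theorem exists_analyticAt_eventuallyEq_left [CompleteSpace E] {f : E → E} {γ : ℝ → E} {x₀ : E}
    {t₀ : ℝ} (hf : AnalyticAt ℝ f x₀) (hγ : ∀ᶠ t in 𝓝[<] t₀, HasDerivAt γ (f (γ t)) t)
    (hlim : Tendsto γ (𝓝[<] t₀) (𝓝 x₀)) :
    ∃ A : ℝ → E, AnalyticAt ℝ A t₀ ∧ A t₀ = x₀ ∧ A =ᶠ[𝓝[<] t₀] γ := by
  obtain ⟨β, rfl, hβγ⟩ :=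
    exists_continuousMap_eventuallyEq_left (hγ.mono fun _ h => h.continuousAt) hlim
  obtain ⟨N, hN, hNf⟩ := exists_analyticAt_superposition I hf
  have hβ : ∀ᶠ t in 𝓝[<] t₀, HasDerivAt β (f (β t)) t := by
    filter_upwards [hγ, eventually_eventuallyEq_nhds_of_left hβγ] with t ht heq
    exact hasDerivAt_ode_congr (F := fun x _ => f x) heq ht
  obtain ⟨a, ha, hint⟩ := exists_forall_Icc_eq_add_integral
    (hf.eventually_analyticAt.mono fun _ h => h.continuousAt) β.continuous hβ
  have hu : Tendsto (rescaledPath β t₀) (𝓝[<] t₀) (𝓝 (.const I (β t₀))) :=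
    rescaledPath_self β t₀ ▸ (rescaledPath β t₀).continuous.continuousWithinAt
  have hfix : ∀ᶠ t in 𝓝[<] t₀, rescaledPath β t₀ t =
      .const I (β t₀) + (t - t₀) • primitiveCLM E (N (rescaledPath β t₀ t)) := by
    filter_upwards [hu.eventually hNf, Ioo_mem_nhdsLT ha] with t hNt ht
    exact rescaledPath_eq_add_smul_primitiveCLM ht.2.le
      (fun τ hτ => hint τ ⟨ht.1.le.trans hτ.1, hτ.2⟩) hNt
  obtain ⟨B, hB, hB₀, hBu⟩ := exists_analyticAt_eventuallyEq_of_eq_add_smul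
    (((primitiveCLM E).analyticAt _).comp hN) nhdsWithin_le_nhds hu hfix
  refine ⟨fun t => B t 1, ((ContinuousMap.evalCLM ℝ (1 : I)).analyticAt _).fun_comp hB,
    by simp [hB₀], ?_⟩
  filter_upwards [hBu, hβγ] with t hBt hβt
  simp [hBt, rescaledPath_apply, hβt]

theorem exists_analyticAt_hasDerivAt_eventuallyEq_left [CompleteSpace E] {F : E → ℝ → E}
    {V : ℝ → E} {V₀ : E} {t₀ : ℝ} (hF : AnalyticAt ℝ (fun q : E × ℝ => F q.1 q.2) (V₀, t₀))
    (hV : ∀ᶠ t in 𝓝[<] t₀, HasDerivAt V (F (V t) t) t) (hlim : Tendsto V (𝓝[<] t₀) (𝓝 V₀)) :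
    ∃ A : ℝ → E, AnalyticAt ℝ A t₀ ∧ A t₀ = V₀ ∧ A =ᶠ[𝓝[<] t₀] V ∧
      ∀ᶠ t in 𝓝 t₀, HasDerivAt A (F (A t) t) t := by
  -- `t ↦ (V t, t)` solves an autonomous equation on `E × ℝ`.
  obtain ⟨B, hB, hB₀, hBV⟩ := exists_analyticAt_eventuallyEq_left
    (f := fun q => (F q.1 q.2, (1 : ℝ))) (γ := fun t => (V t, t)) (hF.prod analyticAt_const)
    (hV.mono fun t ht => ht.prodMk (hasDerivAt_id t))
    (hlim.prodMk_nhds (tendsto_id.mono_left nhdsWithin_le_nhds))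
  have hA : AnalyticAt ℝ (fun t => (B t).1) t₀ := analyticAt_fst.fun_comp hB
  have hAV : (fun t => (B t).1) =ᶠ[𝓝[<] t₀] V := hBV.fun_comp Prod.fst
  have hleft : ∀ᶠ t in 𝓝[<] t₀, HasDerivAt (fun t => (B t).1) (F (B t).1 t) t := by
    filter_upwards [hV, eventually_eventuallyEq_nhds_of_left hAV] with t ht heq
    exact hasDerivAt_ode_congr heq ht
  exact ⟨_, hA, by rw [hB₀], hAV, eventually_hasDerivAt_ode_of_frequently (by rwa [hB₀]) hA
    (hleft.frequently.filter_mono (nhdsWithin_mono _ fun _ ht => ht.ne))⟩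

theorem stmt_5_general [CompleteSpace E] {a t₀ : ℝ} (ha : a < t₀) {V : ℝ → E}
    (hVan : ∀ t ∈ Ioo a t₀, AnalyticAt ℝ V t) {F : E → ℝ → E}
    (hode : ∀ t ∈ Ioo a t₀, HasDerivAt V (F (V t) t) t) {V₀ : E}
    (hlim : Tendsto V (𝓝[<] t₀) (𝓝 V₀))
    (hF : AnalyticAt ℝ (fun q : E × ℝ => F q.1 q.2) (V₀, t₀)) :
    ∃ r > (0 : ℝ), ∃ U : ℝ → E,
      (∀ t ∈ Ioo a (t₀ + r), AnalyticAt ℝ U t) ∧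
      (∀ t ∈ Ioo a t₀, U t = V t) ∧ U t₀ = V₀ ∧
      (∀ t ∈ Ioo a (t₀ + r), HasDerivAt U (F (U t) t) t) := by
  obtain ⟨A, hA, hA₀, hAV, hAode⟩ := exists_analyticAt_hasDerivAt_eventuallyEq_left hF
    (eventually_of_mem (Ioo_mem_nhdsLT ha) hode) hlim
  let U : ℝ → E := (Iio t₀).piecewise V A
  have hUV : EqOn U V (Iio t₀) := piecewise_eqOn _ V A
  have hUA : U =ᶠ[𝓝 t₀] A := by
    filter_upwards [eventually_nhdsWithin_iff.1 hAV] with t ht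
    by_cases hlt : t ∈ Iio t₀
    · rw [hUV hlt, ht hlt]
    · exact piecewise_eq_of_notMem _ V A hlt
  have hnear : ∀ᶠ t in 𝓝 t₀, AnalyticAt ℝ U t ∧ HasDerivAt U (F (U t) t) t := by
    filter_upwards [hUA.eventuallyEq_nhds, hA.eventually_analyticAt, hAode] with t heq hAt hAt'
    exact ⟨hAt.congr heq.symm, hasDerivAt_ode_congr heq hAt'⟩
  obtain ⟨r, hr, hball⟩ := Metric.eventually_nhds_iff.1 hnear
  have hsol : ∀ t ∈ Ioo a (t₀ + r), AnalyticAt ℝ U t ∧ HasDerivAt U (F (U t) t) t := by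
    intro t ht
    rcases lt_or_ge t t₀ with hlt | hge
    · have heq : U =ᶠ[𝓝 t] V := hUV.eventuallyEq_of_mem (Iio_mem_nhds hlt)
      exact ⟨(hVan t ⟨ht.1, hlt⟩).congr heq.symm, hasDerivAt_ode_congr heq (hode t ⟨ht.1, hlt⟩)⟩
    · exact hball (by rw [Real.dist_eq, abs_of_nonneg (sub_nonneg.2 hge)]; linarith [ht.2])
  exact ⟨r, hr, U, fun t ht => (hsol t ht).1, fun t ht => hUV ht.2,
    hUA.eq_of_nhds.trans hA₀, fun t ht => (hsol t ht).2⟩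

end Solution

/-- **Continuation of a real-analytic solution up to an endpoint (Proposition
`continuazione`).**  `ℝ^P` (modelled as `Fin P → ℝ`) carries the maximum coordinate norm.
Let `V` be real-analytic on `(a,t0)`, a solution of `V' = F (V t) t` there, where `F` is
real-analytic on an open neighbourhood `G` of the graph of `V`, uniformly Lipschitz-like at
every point of `G`.  If `V(t) → V0` as `t → t0⁻` and `F` is real-analytic at `(V0,t0)`,
then `V` extends to a real-analytic solution on `(a, t0 + r)` for some `r > 0`, taking the
value `V0` at `t0`. -/
theorem stmt_5 {P : ℕ} (a t0 : ℝ) (hat0 : a < t0)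
    (V : ℝ → Fin P → ℝ)
    (hVan : ∀ t ∈ Ioo a t0, AnalyticAt ℝ V t)
    (G : Set ((Fin P → ℝ) × ℝ)) (hG : IsOpen G)
    (hmem : ∀ t ∈ Ioo a t0, ((V t, t) : (Fin P → ℝ) × ℝ) ∈ G)
    (F : (Fin P → ℝ) → ℝ → Fin P → ℝ)
    (hFan : ∀ p ∈ G, AnalyticAt ℝ (fun q : (Fin P → ℝ) × ℝ => F q.1 q.2) p)
    (hlip : ∀ p ∈ G, ∃ K : ℝ, ∃ O ∈ nhds p,
      ∀ (A B : Fin P → ℝ) (t : ℝ), ((A, t) : (Fin P → ℝ) × ℝ) ∈ O →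
        ((B, t) : (Fin P → ℝ) × ℝ) ∈ O → ‖F A t - F B t‖ ≤ K * ‖A - B‖)
    (hode : ∀ t ∈ Ioo a t0, HasDerivAt V (F (V t) t) t)
    (V0 : Fin P → ℝ)
    (hlim : Filter.Tendsto V (nhdsWithin t0 (Iio t0)) (nhds V0))
    (hF0 : AnalyticAt ℝ (fun q : (Fin P → ℝ) × ℝ => F q.1 q.2) ((V0, t0) : (Fin P → ℝ) × ℝ)) :
    ∃ r > (0 : ℝ), ∃ Uext : ℝ → Fin P → ℝ,
      (∀ t ∈ Ioo a (t0 + r), AnalyticAt ℝ Uext t) ∧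
      (∀ t ∈ Ioo a t0, Uext t = V t) ∧ Uext t0 = V0 ∧
      (∀ t ∈ Ioo a (t0 + r), HasDerivAt Uext (F (Uext t) t) t) :=
  stmt_5_general hat0 hVan hode hlim hF0
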